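/- arXiv:2210.12869 — 2 statements merged into one kernel-verified Lean document; each statement's English description precedes it below -/
import Mathlib

section
/- (Theorem 1.) The minimax and maximin values of the robust Bayesian hypothesis-testing problem coincide: inf_φ sup_{P_0 ∈ 𝒫_0^η, P_1 ∈ 𝒫_1^η} P_E(φ; P_0, P_1) = sup_{P_0 ∈ 𝒫_0^η, P_1 ∈ 𝒫_1^η} inf_φ P_E(φ; P_0, P_1), where the infimum is over all measurable tests φ : X → [0,1]. -/
open MeasureTheory

/-- The Bayes error with equal priors of a (randomized) test `φ` under `(P₀, P₁)`:
`P_E(φ; P₀, P₁) = (1/2) E_{P₀}[φ] + (1/2) E_{P₁}[1 − φ]`. -/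
noncomputable def bayesError {Ω : Type*} [MeasurableSpace Ω]
    (φ : Ω → ℝ) (P0 P1 : Measure Ω) : ℝ :=
  (1 / 2) * ∫ x, φ x ∂P0 + (1 / 2) * ∫ x, (1 - φ x) ∂P1

/-- The moment-constrained uncertainty set around nominal `Qhat` with radius `η`. -/
def momentSet {d : ℕ} (X : Set (EuclideanSpace ℝ (Fin d))) {K : ℕ}
    (ψ : Fin K → X → ℝ) (Qhat : ProbabilityMeasure X) (η : ℝ) :
    Set (ProbabilityMeasure X) :=
  {P | ∀ k, |∫ x, ψ k x ∂(P : Measure X) - ∫ x, ψ k x ∂(Qhat : Measure X)| ≤ η}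

/-- If every point of a nonempty convex set in `ℝ^ι` has a coordinate below `c`, then one convex
combination of the coordinates is at most `c` on the whole set. -/
theorem exists_weights_sum_mul_le {ι : Type*} [Fintype ι] {S : Set (ι → ℝ)}
    (hS : Convex ℝ S) (hne : S.Nonempty) {c : ℝ} (h : ∀ y ∈ S, ∃ i, y i < c) :
    ∃ w : ι → ℝ, (∀ i, 0 ≤ w i) ∧ ∑ i, w i = 1 ∧ ∀ y ∈ S, ∑ i, w i * y i ≤ c := by
  classical
  let s : Set (ι → ℝ) := Set.univ.pi fun _ => Set.Ioi c
  have hs : Convex ℝ s := convex_pi fun _ _ => convex_Ioi c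
  have hso : IsOpen s := isOpen_set_pi Set.finite_univ fun _ _ => isOpen_Ioi
  have hdisj : Disjoint S s := Set.disjoint_left.2 fun y hyS hys => by
    obtain ⟨i, hi⟩ := h y hyS
    exact lt_asymm hi (hys i trivial)
  obtain ⟨g, u, hgS, hgs⟩ := geometric_hahn_banach_open hs hso hS hdisj.symm
  let v : ι → ℝ := fun i => -g (Pi.single i 1)
  have hg : ∀ y, g y = -∑ i, v i * y i := fun y => by
    have hy : y = ∑ i, y i • (Pi.single i (1 : ℝ) : ι → ℝ) := by
      ext j
      simp [Finset.sum_apply, Pi.single_apply]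
    conv_lhs => rw [hy]
    simp only [map_sum, map_smul, smul_eq_mul, v, neg_mul, Finset.sum_neg_distrib, neg_neg]
    exact Finset.sum_congr rfl fun i _ => mul_comm _ _
  have hconst : ∀ δ > 0, -u < (∑ i, v i) * (c + δ) := fun δ hδ => by
    have := hgS (fun _ => c + δ) fun i _ => by simpa using hδ
    rw [hg, ← Finset.sum_mul] at this
    linarith
  have hv : ∀ i, 0 ≤ v i := fun i => by
    by_contra! hi
    have key : ∀ t : ℝ, 0 ≤ t → -u < (∑ j, v j) * (c + 1) + v i * t := fun t ht => by
      have := hgS ((fun _ => c + 1) + Pi.single i t) fun j _ => by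
        have : 0 ≤ (Pi.single i t : ι → ℝ) j := by
          by_cases hj : j = i
          · subst hj; simpa
          · simp [hj]
        simp only [Pi.add_apply, Set.mem_Ioi]
        linarith
      rw [hg] at this
      simp only [Pi.add_apply, mul_add, Finset.sum_add_distrib, Pi.single_apply, mul_ite,
        mul_zero, Finset.sum_ite_eq', Finset.mem_univ, if_true] at this
      simp only [mul_add, Finset.sum_mul]
      linarith
    have h0 := hconst 1 one_pos
    have h1 := key (((∑ j, v j) * (c + 1) + u) / (-v i))
      (div_nonneg (by linarith) (by linarith))
    have h2 : v i * (((∑ j, v j) * (c + 1) + u) / (-v i)) = -((∑ j, v j) * (c + 1) + u) := by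
      rw [div_neg, mul_neg, mul_div_cancel₀ _ hi.ne]
    linarith
  have hvpos : 0 < ∑ i, v i := by
    refine (Finset.sum_nonneg fun i _ => hv i).lt_of_ne fun h0 => ?_
    have hz : ∀ i, v i = 0 := fun i =>
      (Finset.sum_eq_zero_iff_of_nonneg fun i _ => hv i).1 h0.symm i (Finset.mem_univ i)
    obtain ⟨y, hy⟩ := hne
    have h1 := hgs y hy
    have h2 := hconst 1 one_pos
    rw [hg] at h1
    simp only [hz, zero_mul, Finset.sum_const_zero] at h1 h2
    linarith
  have hcu : -u ≤ (∑ i, v i) * c := by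
    refine le_of_forall_pos_lt_add fun ε hε => ?_
    have := hconst (ε / ∑ i, v i) (div_pos hε hvpos)
    rwa [mul_add, mul_div_cancel₀ _ hvpos.ne'] at this
  refine ⟨fun i => v i / ∑ j, v j, fun i => div_nonneg (hv i) hvpos.le, ?_, fun y hy => ?_⟩
  · rw [← Finset.sum_div, div_self hvpos.ne']
  · have h1 := hgs y hy
    rw [hg] at h1
    simp only [div_mul_eq_mul_div]
    rw [← Finset.sum_div, div_le_iff₀ hvpos]
    linarith

section Mixture

variable {Ω : Type*} [MeasurableSpace Ω]

/-- The mixture of two probability measures, characterised through its integrals. -/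
theorem exists_probabilityMeasure_integral_eq_add (P Q : ProbabilityMeasure Ω) {a b : ℝ}
    (ha : 0 ≤ a) (hb : 0 ≤ b) (hab : a + b = 1) :
    ∃ R : ProbabilityMeasure Ω, ∀ f : Ω → ℝ, Integrable f (P : Measure Ω) →
      Integrable f (Q : Measure Ω) →
      ∫ x, f x ∂(R : Measure Ω) =
        a * ∫ x, f x ∂(P : Measure Ω) + b * ∫ x, f x ∂(Q : Measure Ω) := by
  have hR : IsProbabilityMeasure
      (ENNReal.ofReal a • (P : Measure Ω) + ENNReal.ofReal b • (Q : Measure Ω)) :=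
    ⟨by simp [← ENNReal.ofReal_add ha hb, hab]⟩
  refine ⟨⟨_, hR⟩, fun f hfP hfQ => ?_⟩
  rw [ProbabilityMeasure.coe_mk, integral_add_measure (hfP.smul_measure ENNReal.ofReal_ne_top)
    (hfQ.smul_measure ENNReal.ofReal_ne_top)]
  simp [integral_smul_measure, ha, hb]

theorem integrable_of_mem_Icc {μ : Measure Ω} [IsFiniteMeasure μ] {φ : Ω → ℝ}
    (hφ : Measurable φ) (h : ∀ x, φ x ∈ Set.Icc (0 : ℝ) 1) : Integrable φ μ :=
  Integrable.of_bound hφ.aestronglyMeasurable 1 <| .of_forall fun x => by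
    rw [Real.norm_of_nonneg (h x).1]
    exact (h x).2

theorem bayesError_eq {P0 P1 : Measure Ω} [IsProbabilityMeasure P1]
    {φ : Ω → ℝ} (hφ : Integrable φ P1) :
    bayesError φ P0 P1 = (1 / 2) * ∫ x, φ x ∂P0 + (1 / 2) * (1 - ∫ x, φ x ∂P1) := by
  rw [bayesError, integral_sub (integrable_const _) hφ]
  simp

theorem bayesError_mem_Icc {P0 P1 : Measure Ω} [IsProbabilityMeasure P0] [IsProbabilityMeasure P1]
    {φ : Ω → ℝ} (hφ : Measurable φ) (h : ∀ x, φ x ∈ Set.Icc (0 : ℝ) 1) :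
    bayesError φ P0 P1 ∈ Set.Icc (0 : ℝ) 1 := by
  have bounds : ∀ (P : Measure Ω) [IsProbabilityMeasure P], ∫ x, φ x ∂P ∈ Set.Icc (0 : ℝ) 1 :=
    fun P _ => ⟨integral_nonneg fun x => (h x).1, by
      simpa using integral_mono (integrable_of_mem_Icc (μ := P) hφ h) (integrable_const (1 : ℝ))
        fun x => (h x).2⟩
  rw [bayesError_eq (integrable_of_mem_Icc hφ h)]
  obtain ⟨h0, h0'⟩ := bounds P0
  obtain ⟨h1, h1'⟩ := bounds P1
  constructor <;> linarith

theorem bayesError_sum_mul {ι : Type*} [Fintype ι] {P0 P1 : Measure Ω} [IsProbabilityMeasure P1]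
    {φ : ι → Ω → ℝ} (hφ0 : ∀ i, Integrable (φ i) P0) (hφ1 : ∀ i, Integrable (φ i) P1)
    {w : ι → ℝ} (hw : ∑ i, w i = 1) :
    bayesError (fun x => ∑ i, w i * φ i x) P0 P1 = ∑ i, w i * bayesError (φ i) P0 P1 := by
  rw [bayesError_eq (integrable_finsetSum _ fun i _ => (hφ1 i).const_mul _),
    integral_finsetSum _ fun i _ => (hφ0 i).const_mul _,
    integral_finsetSum _ fun i _ => (hφ1 i).const_mul _]
  simp_rw [fun i => bayesError_eq (P0 := P0) (hφ1 i), integral_const_mul]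
  have : ∀ i, w i * (1 / 2 * ∫ x, φ i x ∂P0 + 1 / 2 * (1 - ∫ x, φ i x ∂P1)) =
      1 / 2 * (w i * ∫ x, φ i x ∂P0) + 1 / 2 * (w i - w i * ∫ x, φ i x ∂P1) := fun i => by ring
  simp_rw [this, Finset.sum_add_distrib, ← Finset.mul_sum, Finset.sum_sub_distrib, hw]

end Mixture

section Compact

variable {Ω : Type*} [MetricSpace Ω] [MeasurableSpace Ω] [BorelSpace Ω]

/-- Continuous tests do as well as measurable ones, up to an arbitrarily small error. -/
theorem exists_continuous_bayesError_le (P0 P1 : ProbabilityMeasure Ω) {φ : Ω → ℝ}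
    (hφ : Measurable φ) (h : ∀ x, φ x ∈ Set.Icc (0 : ℝ) 1) {ε : ℝ} (hε : 0 < ε) :
    ∃ g : Ω → ℝ, Continuous g ∧ (∀ x, g x ∈ Set.Icc (0 : ℝ) 1) ∧
      bayesError g P0 P1 ≤ bayesError φ P0 P1 + ε := by
  obtain ⟨f, hf, hfi⟩ := (integrable_of_mem_Icc (μ := (P0 : Measure Ω) + (P1 : Measure Ω))
    hφ h).exists_boundedContinuous_integral_sub_le hε
  let g : Ω → ℝ := fun x => max 0 (min 1 (f x))
  have hg : Continuous g := by fun_prop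
  have hgI : ∀ x, g x ∈ Set.Icc (0 : ℝ) 1 := fun x => by simp [g]
  have hle : ∀ x, |φ x - g x| ≤ ‖φ x - f x‖ := fun x => by
    obtain ⟨h0, h1⟩ := h x
    rw [Real.norm_eq_abs]
    simp only [g]
    grind
  have hI : ∀ (P : ProbabilityMeasure Ω) {ξ : Ω → ℝ}, Measurable ξ →
      (∀ x, ξ x ∈ Set.Icc (0 : ℝ) 1) → Integrable ξ (P : Measure Ω) :=
    fun P _ hm hb => integrable_of_mem_Icc hm hb
  have hdiff : ∀ P : ProbabilityMeasure Ω,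
      |∫ x, φ x ∂(P : Measure Ω) - ∫ x, g x ∂(P : Measure Ω)| ≤
        ∫ x, |φ x - g x| ∂(P : Measure Ω) := fun P => by
    rw [← integral_sub (hI P hφ h) (hI P hg.measurable hgI)]
    exact abs_integral_le_integral_abs
  have habs : ∀ P : ProbabilityMeasure Ω, Integrable (fun x => |φ x - g x|) (P : Measure Ω) :=
    fun P => ((hI P hφ h).sub (hI P hg.measurable hgI)).abs
  have htot : ∫ x, |φ x - g x| ∂(P0 : Measure Ω) + ∫ x, |φ x - g x| ∂(P1 : Measure Ω) ≤ ε := by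
    rw [← integral_add_measure (habs P0) (habs P1)]
    exact (integral_mono ((habs P0).add_measure (habs P1))
      ((integrable_of_mem_Icc hφ h).sub hfi).norm hle).trans hf
  refine ⟨g, hg, hgI, ?_⟩
  rw [bayesError_eq (hI P1 hφ h), bayesError_eq (hI P1 hg.measurable hgI)]
  have h0 := abs_le.1 (hdiff P0)
  have h1 := abs_le.1 (hdiff P1)
  linarith [h0.1, h0.2, h1.1, h1.2]

variable [CompactSpace Ω]

theorem continuous_integral_probabilityMeasure {f : Ω → ℝ} (hf : Continuous f) :
    Continuous fun P : ProbabilityMeasure Ω => ∫ x, f x ∂(P : Measure Ω) :=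
  ProbabilityMeasure.continuous_integral_boundedContinuousFunction
    (BoundedContinuousFunction.mkOfCompact ⟨f, hf⟩)

theorem integrable_of_continuous {μ : Measure Ω} [IsFiniteMeasure μ] {f : Ω → ℝ}
    (hf : Continuous f) : Integrable f μ :=
  (BoundedContinuousFunction.mkOfCompact ⟨f, hf⟩).integrable μ

/-- If each pair in a compact convex family of pairs admits a test with error below `c`, then some
continuous test has error at most `c` for all pairs simultaneously. -/
theorem exists_continuous_forall_bayesError_le
    {C : Set (ProbabilityMeasure Ω × ProbabilityMeasure Ω)}
    (hC : IsCompact C) (hne : C.Nonempty)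
    (hconv : ∀ p ∈ C, ∀ q ∈ C, ∀ a b : ℝ, 0 ≤ a → 0 ≤ b → a + b = 1 →
      ∃ r ∈ C, ∀ f : Ω → ℝ, Continuous f →
        ∫ x, f x ∂(r.1 : Measure Ω) =
          a * ∫ x, f x ∂(p.1 : Measure Ω) + b * ∫ x, f x ∂(q.1 : Measure Ω) ∧
        ∫ x, f x ∂(r.2 : Measure Ω) =
          a * ∫ x, f x ∂(p.2 : Measure Ω) + b * ∫ x, f x ∂(q.2 : Measure Ω))
    {c : ℝ} (h : ∀ p ∈ C, ∃ φ : Ω → ℝ, Measurable φ ∧ (∀ x, φ x ∈ Set.Icc (0 : ℝ) 1) ∧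
      bayesError φ p.1 p.2 < c) :
    ∃ φ : Ω → ℝ, Continuous φ ∧ (∀ x, φ x ∈ Set.Icc (0 : ℝ) 1) ∧
      ∀ p ∈ C, bayesError φ p.1 p.2 ≤ c := by
  let T := {φ : Ω → ℝ // Continuous φ ∧ ∀ x, φ x ∈ Set.Icc (0 : ℝ) 1}
  have hb : ∀ (φ : T) (p : ProbabilityMeasure Ω × ProbabilityMeasure Ω),
      bayesError φ.1 p.1 p.2 = (1 / 2) * ∫ x, φ.1 x ∂(p.1 : Measure Ω) +
        (1 / 2) * (1 - ∫ x, φ.1 x ∂(p.2 : Measure Ω)) :=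
    fun φ p => bayesError_eq (integrable_of_continuous φ.2.1)
  have hopen : ∀ φ : T, IsOpen {p : ProbabilityMeasure Ω × ProbabilityMeasure Ω |
      bayesError φ.1 p.1 p.2 < c} := fun φ => by
    have := continuous_integral_probabilityMeasure φ.2.1
    simp_rw [hb φ]
    exact isOpen_lt (((this.comp continuous_fst).const_mul _).add
      ((continuous_const.sub (this.comp continuous_snd)).const_mul _)) continuous_const
  obtain ⟨t, ht⟩ := hC.elim_finite_subcover _ hopen fun p hp => by
    obtain ⟨φ, hφ, hφI, hlt⟩ := h p hp
    obtain ⟨g, hg, hgI, hle⟩ := exists_continuous_bayesError_le p.1 p.2 hφ hφI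
      (half_pos (sub_pos.2 hlt))
    exact Set.mem_iUnion.2 ⟨⟨g, hg, hgI⟩, show _ < c by linarith⟩
  let e : ProbabilityMeasure Ω × ProbabilityMeasure Ω → t → ℝ :=
    fun p i => bayesError i.1.1 p.1 p.2
  have hS : Convex ℝ (e '' C) := by
    rintro _ ⟨p, hp, rfl⟩ _ ⟨q, hq, rfl⟩ a b ha hb' hab
    obtain ⟨r, hr, hrf⟩ := hconv p hp q hq a b ha hb' hab
    refine ⟨r, hr, funext fun i => ?_⟩
    obtain ⟨h1, h2⟩ := hrf i.1.1 i.1.2.1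
    simp only [e, Pi.add_apply, Pi.smul_apply, smul_eq_mul, hb, h1, h2]
    linear_combination (-1 / 2 : ℝ) * hab
  obtain ⟨w, hw0, hw1, hw⟩ := exists_weights_sum_mul_le hS (hne.image e) (c := c) <| by
    rintro _ ⟨p, hp, rfl⟩
    obtain ⟨φ, hφt, hlt⟩ := Set.mem_iUnion₂.1 (ht hp)
    exact ⟨⟨φ, hφt⟩, hlt⟩
  refine ⟨fun x => ∑ i, w i * i.1.1 x, ?_, fun x => ⟨?_, ?_⟩, fun p hp => ?_⟩
  · exact continuous_finsetSum _ fun i _ => continuous_const.mul i.1.2.1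
  · exact Finset.sum_nonneg fun i _ => mul_nonneg (hw0 i) (i.1.2.2 x).1
  · exact (Finset.sum_le_sum fun i _ => mul_le_of_le_one_right (hw0 i) (i.1.2.2 x).2).trans hw1.le
  · rw [bayesError_sum_mul (fun i => integrable_of_continuous i.1.2.1)
      (fun i => integrable_of_continuous i.1.2.1) hw1]
    exact hw _ ⟨p, hp, rfl⟩

end Compact

section MomentSet

variable {d : ℕ} {X : Set (EuclideanSpace ℝ (Fin d))} {K : ℕ} {ψ : Fin K → X → ℝ}

theorem isClosed_momentSet [CompactSpace X] (hψ : ∀ k, Continuous (ψ k))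
    (Q : ProbabilityMeasure X) (η : ℝ) : IsClosed (momentSet X ψ Q η) := by
  simp only [momentSet, Set.ofPred_forall]
  exact isClosed_iInter fun k => isClosed_le
    ((continuous_integral_probabilityMeasure (hψ k)).sub continuous_const).abs continuous_const

theorem exists_mem_momentSet_integral_eq_add [CompactSpace X] (hψ : ∀ k, Continuous (ψ k))
    {Q : ProbabilityMeasure X} {η : ℝ} {P P' : ProbabilityMeasure X}
    (hP : P ∈ momentSet X ψ Q η) (hP' : P' ∈ momentSet X ψ Q η) {a b : ℝ}
    (ha : 0 ≤ a) (hb : 0 ≤ b) (hab : a + b = 1) :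
    ∃ R ∈ momentSet X ψ Q η, ∀ f : X → ℝ, Continuous f →
      ∫ x, f x ∂(R : Measure X) =
        a * ∫ x, f x ∂(P : Measure X) + b * ∫ x, f x ∂(P' : Measure X) := by
  obtain ⟨R, hR⟩ := exists_probabilityMeasure_integral_eq_add P P' ha hb hab
  have hR' : ∀ f : X → ℝ, Continuous f → _ := fun f hf =>
    hR f (integrable_of_continuous hf) (integrable_of_continuous hf)
  refine ⟨R, fun k => ?_, hR'⟩
  rw [hR' _ (hψ k)]
  have hmem := (convex_Icc (-η) η) (abs_le.1 (hP k)) (abs_le.1 (hP' k)) ha hb hab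
  have heq : a * ∫ x, ψ k x ∂(P : Measure X) + b * ∫ x, ψ k x ∂(P' : Measure X) -
      ∫ x, ψ k x ∂(Q : Measure X) =
      a • (∫ x, ψ k x ∂(P : Measure X) - ∫ x, ψ k x ∂(Q : Measure X)) +
      b • (∫ x, ψ k x ∂(P' : Measure X) - ∫ x, ψ k x ∂(Q : Measure X)) := by
    simp only [smul_eq_mul]
    linear_combination (∫ x, ψ k x ∂(Q : Measure X)) * hab
  rw [heq]
  exact abs_le.2 hmem

end MomentSet

/-- **Theorem 1.** Minimax equals maximin for the robust Bayesian
hypothesis-testing problem over moment-constrained uncertainty sets. -/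
theorem minimax_eq_maximin
    {d : ℕ} (X : Set (EuclideanSpace ℝ (Fin d))) (hX : IsCompact X)
    {K : ℕ} (ψ : Fin K → X → ℝ) (hψ : ∀ k, Continuous (ψ k))
    (Q0 Q1 : ProbabilityMeasure X) (η : ℝ) (hη : 0 < η) :
    sInf {r : ℝ | ∃ φ : X → ℝ, Measurable φ ∧ (∀ x, φ x ∈ Set.Icc (0 : ℝ) 1) ∧
        r = sSup {e : ℝ | ∃ P0 ∈ momentSet X ψ Q0 η, ∃ P1 ∈ momentSet X ψ Q1 η,
          e = bayesError φ (P0 : Measure X) (P1 : Measure X)}} =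
      sSup {r : ℝ | ∃ P0 ∈ momentSet X ψ Q0 η, ∃ P1 ∈ momentSet X ψ Q1 η,
        r = sInf {e : ℝ | ∃ φ : X → ℝ, Measurable φ ∧ (∀ x, φ x ∈ Set.Icc (0 : ℝ) 1) ∧
          e = bayesError φ (P0 : Measure X) (P1 : Measure X)}} := by
  have : CompactSpace X := isCompact_iff_compactSpace.1 hX
  have hQ : ∀ Q : ProbabilityMeasure X, Q ∈ momentSet X ψ Q η := fun Q k => by simpa using hη.le
  have h01 : ∀ x : X, (fun _ : X => (0 : ℝ)) x ∈ Set.Icc (0 : ℝ) 1 := fun x => by simp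
  have hbelow : ∀ P0 P1 : ProbabilityMeasure X, BddBelow {e : ℝ | ∃ φ : X → ℝ, Measurable φ ∧
      (∀ x, φ x ∈ Set.Icc (0 : ℝ) 1) ∧ e = bayesError φ (P0 : Measure X) (P1 : Measure X)} :=
    fun P0 P1 => ⟨0, by rintro _ ⟨φ, hφ, hI, rfl⟩; exact (bayesError_mem_Icc hφ hI).1⟩
  have hzero : ∀ P0 P1 : ProbabilityMeasure X,
      bayesError (fun _ => 0) (P0 : Measure X) (P1 : Measure X) ∈ {e : ℝ | ∃ φ : X → ℝ,
        Measurable φ ∧ (∀ x, φ x ∈ Set.Icc (0 : ℝ) 1) ∧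
          e = bayesError φ (P0 : Measure X) (P1 : Measure X)} :=
    fun _ _ => ⟨_, measurable_const, h01, rfl⟩
  have habove : ∀ φ : X → ℝ, Measurable φ → (∀ x, φ x ∈ Set.Icc (0 : ℝ) 1) →
      BddAbove {e : ℝ | ∃ P0 ∈ momentSet X ψ Q0 η, ∃ P1 ∈ momentSet X ψ Q1 η,
        e = bayesError φ (P0 : Measure X) (P1 : Measure X)} :=
    fun φ hφ hI => ⟨1, by rintro _ ⟨P0, _, P1, _, rfl⟩; exact (bayesError_mem_Icc hφ hI).2⟩
  apply le_antisymm
  · refine le_of_forall_pos_le_add fun ε hε => ?_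
    set v := sSup {r : ℝ | ∃ P0 ∈ momentSet X ψ Q0 η, ∃ P1 ∈ momentSet X ψ Q1 η,
        r = sInf {e : ℝ | ∃ φ : X → ℝ, Measurable φ ∧ (∀ x, φ x ∈ Set.Icc (0 : ℝ) 1) ∧
          e = bayesError φ (P0 : Measure X) (P1 : Measure X)}}
    obtain ⟨φ, hφ, hI, hle⟩ := exists_continuous_forall_bayesError_le
      (C := momentSet X ψ Q0 η ×ˢ momentSet X ψ Q1 η) (c := v + ε)
      ((isClosed_momentSet hψ Q0 η).prod (isClosed_momentSet hψ Q1 η)).isCompact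
      ⟨(Q0, Q1), hQ Q0, hQ Q1⟩
      (fun p hp q hq a b ha hb hab => by
        obtain ⟨R0, hR0, h0⟩ := exists_mem_momentSet_integral_eq_add hψ hp.1 hq.1 ha hb hab
        obtain ⟨R1, hR1, h1⟩ := exists_mem_momentSet_integral_eq_add hψ hp.2 hq.2 ha hb hab
        exact ⟨(R0, R1), ⟨hR0, hR1⟩, fun f hf => ⟨h0 f hf, h1 f hf⟩⟩)
      (fun p hp => by
        have hlt : sInf {e : ℝ | ∃ φ : X → ℝ, Measurable φ ∧ (∀ x, φ x ∈ Set.Icc (0 : ℝ) 1) ∧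
            e = bayesError φ (p.1 : Measure X) (p.2 : Measure X)} < v + ε := by
          refine lt_add_of_le_of_pos ?_ hε
          refine le_csSup ⟨1, ?_⟩ ⟨p.1, hp.1, p.2, hp.2, rfl⟩
          rintro _ ⟨P0, _, P1, _, rfl⟩
          exact le_trans (csInf_le (hbelow P0 P1) (hzero P0 P1))
            (bayesError_mem_Icc measurable_const h01).2
        obtain ⟨_, ⟨φ, hφ, hI, rfl⟩, hφlt⟩ :=
          exists_lt_of_csInf_lt ⟨_, hzero p.1 p.2⟩ hlt
        exact ⟨φ, hφ, hI, hφlt⟩)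
    refine le_trans (csInf_le ⟨0, ?_⟩ ⟨φ, hφ.measurable, hI, rfl⟩)
      (csSup_le ⟨_, Q0, hQ Q0, Q1, hQ Q1, rfl⟩ ?_)
    · rintro _ ⟨φ, hφ, hI, rfl⟩
      exact le_trans (bayesError_mem_Icc hφ hI).1
        (le_csSup (habove φ hφ hI) ⟨Q0, hQ Q0, Q1, hQ Q1, rfl⟩)
    · rintro _ ⟨P0, h0, P1, h1, rfl⟩
      exact hle (P0, P1) ⟨h0, h1⟩
  · refine csSup_le ⟨_, Q0, hQ Q0, Q1, hQ Q1, rfl⟩ ?_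
    rintro _ ⟨P0, h0, P1, h1, rfl⟩
    refine le_csInf ⟨_, _, measurable_const, h01, rfl⟩ ?_
    rintro _ ⟨φ, hφ, hI, rfl⟩
    exact le_trans (csInf_le (hbelow P0 P1) ⟨φ, hφ, hI, rfl⟩)
      (le_csSup (habove φ hφ hI) ⟨P0, h0, P1, h1, rfl⟩)
end

section
/- (Lemma 1.) The function g(η) = sup_{P_0 ∈ 𝒫_0^η, P_1 ∈ 𝒫_1^η} (1 − TV(P_0, P_1)) is concave in η on the open interval (0, η_max), where η_max = max_{k} |E_{Q̂_1}[ψ_k] − E_{Q̂_0}[ψ_k]| / 2. -/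
open MeasureTheory

/-- The total variation distance between two measures:
`TV(P, Q) = sup over measurable sets A of |P(A) − Q(A)|`. -/
noncomputable def tv {Ω : Type*} [MeasurableSpace Ω] (P Q : Measure Ω) : ℝ :=
  ⨆ A : {A : Set Ω // MeasurableSet A}, |(P A.1).toReal - (Q A.1).toReal|

theorem tv_nonneg {Ω : Type*} [MeasurableSpace Ω] (P Q : Measure Ω) : 0 ≤ tv P Q :=
  Real.iSup_nonneg fun _ => abs_nonneg _

theorem abs_sub_le_tv {Ω : Type*} [MeasurableSpace Ω] (P Q : Measure Ω)
    [IsProbabilityMeasure P] [IsProbabilityMeasure Q] {A : Set Ω} (hA : MeasurableSet A) :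
    |(P A).toReal - (Q A).toReal| ≤ tv P Q := by
  refine le_ciSup (f := fun A : {A : Set Ω // MeasurableSet A} =>
    |(P A.1).toReal - (Q A.1).toReal|) ⟨1, ?_⟩ ⟨A, hA⟩
  rintro _ ⟨B, rfl⟩
  have hP : (P B.1).toReal ≤ 1 := measureReal_le_one
  have hQ : (Q B.1).toReal ≤ 1 := measureReal_le_one
  have hP' : 0 ≤ (P B.1).toReal := ENNReal.toReal_nonneg
  have hQ' : 0 ≤ (Q B.1).toReal := ENNReal.toReal_nonneg
  exact abs_le.2 ⟨by linarith, by linarith⟩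

/-- The mixture `a P + b P'` of two probability measures. -/
noncomputable def mixture {Ω : Type*} [MeasurableSpace Ω] {a b : ℝ} (ha : 0 ≤ a) (hb : 0 ≤ b)
    (hab : a + b = 1) (P P' : ProbabilityMeasure Ω) : ProbabilityMeasure Ω :=
  ⟨ENNReal.ofReal a • (P : Measure Ω) + ENNReal.ofReal b • (P' : Measure Ω), ⟨by
    simp [← ENNReal.ofReal_add ha hb, hab]⟩⟩

theorem mixture_apply_toReal {Ω : Type*} [MeasurableSpace Ω] {a b : ℝ} (ha : 0 ≤ a) (hb : 0 ≤ b)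
    (hab : a + b = 1) (P P' : ProbabilityMeasure Ω) (A : Set Ω) :
    ((mixture ha hb hab P P' : Measure Ω) A).toReal
      = a * ((P : Measure Ω) A).toReal + b * ((P' : Measure Ω) A).toReal := by
  change ((ENNReal.ofReal a • (P : Measure Ω) + ENNReal.ofReal b • (P' : Measure Ω)) A).toReal = _
  rw [Measure.add_apply, Measure.smul_apply, Measure.smul_apply, smul_eq_mul, smul_eq_mul,
    ENNReal.toReal_add (by finiteness) (by finiteness), ENNReal.toReal_mul, ENNReal.toReal_mul,
    ENNReal.toReal_ofReal ha, ENNReal.toReal_ofReal hb]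

theorem integral_mixture {Ω : Type*} [MeasurableSpace Ω] {a b : ℝ} (ha : 0 ≤ a) (hb : 0 ≤ b)
    (hab : a + b = 1) (P P' : ProbabilityMeasure Ω) {f : Ω → ℝ}
    (hf : Integrable f (P : Measure Ω)) (hf' : Integrable f (P' : Measure Ω)) :
    ∫ x, f x ∂(mixture ha hb hab P P' : Measure Ω)
      = a * ∫ x, f x ∂(P : Measure Ω) + b * ∫ x, f x ∂(P' : Measure Ω) := by
  change ∫ x, f x ∂(ENNReal.ofReal a • (P : Measure Ω) + ENNReal.ofReal b • (P' : Measure Ω)) = _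
  rw [integral_add_measure (hf.smul_measure ENNReal.ofReal_ne_top)
    (hf'.smul_measure ENNReal.ofReal_ne_top), integral_smul_measure, integral_smul_measure,
    ENNReal.toReal_ofReal ha, ENNReal.toReal_ofReal hb, smul_eq_mul, smul_eq_mul]

theorem abs_convex_combination_sub_le {a b p p' q q' s t : ℝ} (ha : 0 ≤ a) (hb : 0 ≤ b)
    (h : |p - q| ≤ s) (h' : |p' - q'| ≤ t) :
    |(a * p + b * p') - (a * q + b * q')| ≤ a * s + b * t := by
  rw [abs_le] at *
  constructor <;> nlinarith

theorem tv_mixture_le {Ω : Type*} [MeasurableSpace Ω] {a b : ℝ} (ha : 0 ≤ a) (hb : 0 ≤ b)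
    (hab : a + b = 1) (P P' Q Q' : ProbabilityMeasure Ω) :
    tv (mixture ha hb hab P P' : Measure Ω) (mixture ha hb hab Q Q' : Measure Ω)
      ≤ a * tv (P : Measure Ω) (Q : Measure Ω) + b * tv (P' : Measure Ω) (Q' : Measure Ω) := by
  have : Nonempty {A : Set Ω // MeasurableSet A} := ⟨⟨∅, MeasurableSet.empty⟩⟩
  refine ciSup_le fun A => ?_
  rw [mixture_apply_toReal, mixture_apply_toReal]
  exact abs_convex_combination_sub_le ha hb (abs_sub_le_tv _ _ A.2) (abs_sub_le_tv _ _ A.2)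

theorem mixture_mem_momentSet {d : ℕ} {X : Set (EuclideanSpace ℝ (Fin d))} (hX : IsCompact X)
    {K : ℕ} {ψ : Fin K → X → ℝ} (hψ : ∀ k, Continuous (ψ k)) {Q P P' : ProbabilityMeasure X}
    {a b η η' : ℝ} (ha : 0 ≤ a) (hb : 0 ≤ b) (hab : a + b = 1)
    (hP : P ∈ momentSet X ψ Q η) (hP' : P' ∈ momentSet X ψ Q η') :
    mixture ha hb hab P P' ∈ momentSet X ψ Q (a * η + b * η') := by
  intro k
  have : CompactSpace X := isCompact_iff_compactSpace.1 hX
  have hint (R : ProbabilityMeasure X) : Integrable (ψ k) (R : Measure X) :=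
    (hψ k).integrable_of_hasCompactSupport (HasCompactSupport.of_compactSpace _)
  rw [integral_mixture ha hb hab P P' (hint P) (hint P')]
  have h := abs_convex_combination_sub_le ha hb (hP k) (hP' k)
  rwa [← add_mul, hab, one_mul] at h

/-- **Lemma 1.** The worst-case affinity
`g(η) = sup_{P₀ ∈ 𝒫₀^η, P₁ ∈ 𝒫₁^η} (1 − TV(P₀, P₁))` is concave in `η` on
`(0, η_max)`, where `η_max = max_k |E_{Q̂₁}[ψ_k] − E_{Q̂₀}[ψ_k]| / 2`. -/
theorem worst_case_affinity_concave
    {d : ℕ} (X : Set (EuclideanSpace ℝ (Fin d))) (hX : IsCompact X)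
    {K : ℕ} (hK : 0 < K) (ψ : Fin K → X → ℝ) (hψ : ∀ k, Continuous (ψ k))
    (Q0 Q1 : ProbabilityMeasure X) :
    ConcaveOn ℝ
      (Set.Ioo 0 (⨆ k : Fin K,
        |∫ x, ψ k x ∂(Q1 : Measure X) - ∫ x, ψ k x ∂(Q0 : Measure X)| / 2))
      (fun η => sSup {r : ℝ | ∃ P0 ∈ momentSet X ψ Q0 η, ∃ P1 ∈ momentSet X ψ Q1 η,
        r = 1 - tv (P0 : Measure X) (P1 : Measure X)}) := by
  refine ⟨convex_Ioo _ _, ?_⟩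
  intro x hx y hy a b ha hb hab
  set S : ℝ → Set ℝ := fun η => {r : ℝ | ∃ P0 ∈ momentSet X ψ Q0 η,
    ∃ P1 ∈ momentSet X ψ Q1 η, r = 1 - tv (P0 : Measure X) (P1 : Measure X)}
  change a * sSup (S x) + b * sSup (S y) ≤ sSup (S (a * x + b * y))
  have hne {η : ℝ} (hη : 0 < η) : (S η).Nonempty :=
    ⟨_, Q0, fun k => by simpa using hη.le, Q1, fun k => by simpa using hη.le, rfl⟩
  have hbdd (η : ℝ) : BddAbove (S η) := by
    refine ⟨1, ?_⟩
    rintro _ ⟨P0, -, P1, -, rfl⟩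
    linarith [tv_nonneg (P0 : Measure X) (P1 : Measure X)]
  have key : ∀ r ∈ S x, ∀ s ∈ S y, a * r + b * s ≤ sSup (S (a * x + b * y)) := by
    rintro _ ⟨P0, hP0, P1, hP1, rfl⟩ _ ⟨P0', hP0', P1', hP1', rfl⟩
    refine le_trans ?_ (le_csSup (hbdd _) ⟨_, mixture_mem_momentSet hX hψ ha hb hab hP0 hP0', _,
      mixture_mem_momentSet hX hψ ha hb hab hP1 hP1', rfl⟩)
    linarith [tv_mixture_le ha hb hab P0 P0' P1 P1']
  rw [← smul_eq_mul a, ← smul_eq_mul b, ← Real.sSup_smul_of_nonneg ha,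
    ← Real.sSup_smul_of_nonneg hb, ← le_sub_iff_add_le]
  refine csSup_le (hne hx.1).smul_set ?_
  rintro _ ⟨r, hr, rfl⟩
  rw [le_sub_comm]
  refine csSup_le (hne hy.1).smul_set ?_
  rintro _ ⟨s, hs, rfl⟩
  simpa [le_sub_iff_add_le, add_comm] using key r hr s hs
end
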